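/- Let α be a type with decidable equality, let L be a multiset over α with card m, and let Vc be a finite set (Finset) of elements of α with card c ≥ 1. Suppose that the number of elements of L, counted with multiplicity, that do not belong to Vc is at most f, and that f·(c+1) < m. Then there exists v ∈ Vc such that for every w ∉ Vc, the multiplicity of w in L is strictly less than the multiplicity of v in L. -/

import Mathlib

section Count

variable {α : Type*} [DecidableEq α]

theorem sum_count_eq_card_filter_mem (s : Multiset α) (t : Finset α) :
    ∑ a ∈ t, s.count a = (s.filter (· ∈ t)).card :=
  calc
    ∑ a ∈ t, s.count a = ∑ a ∈ t, (s.filter (· ∈ t)).count a :=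
      Finset.sum_congr rfl fun _ ha ↦ (Multiset.count_filter_of_pos (p := (· ∈ t)) ha).symm
    _ = (s.filter (· ∈ t)).card :=
      Multiset.sum_count_eq_card fun _ ha ↦ Multiset.of_mem_filter ha

variable {s : Multiset α}

theorem exists_lt_count_of_mul_lt_card_filter_mem {t : Finset α} {n : ℕ}
    (h : t.card * n < (s.filter (· ∈ t)).card) : ∃ a ∈ t, n < s.count a := by
  apply Finset.exists_lt_of_sum_lt
  rwa [Finset.sum_const, smul_eq_mul, sum_count_eq_card_filter_mem]

theorem count_le_card_filter {p : α → Prop} [DecidablePred p] {a : α} (ha : p a) :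
    s.count a ≤ (s.filter p).card := by
  rw [← Multiset.count_filter_of_pos ha]
  exact Multiset.count_le_card a (s.filter p)

end Count

theorem strong_validity_core {α : Type*} [DecidableEq α]
    (L : Multiset α) (Vc : Finset α) (m c f : ℕ)
    (hm : Multiset.card L = m) (hc : Vc.card = c) (hc1 : 1 ≤ c)
    (hf : (L.filter (· ∉ Vc)).card ≤ f)
    (hres : f * (c + 1) < m) :
    ∃ v ∈ Vc, ∀ w ∉ Vc, Multiset.count w L < Multiset.count v L := by
  have card_split : (L.filter (· ∈ Vc)).card + (L.filter (· ∉ Vc)).card = m := by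
    rw [← Multiset.card_add, Multiset.filter_add_not, hm]
  have mul_lt_card_mem : Vc.card * f < (L.filter (· ∈ Vc)).card := by
    rw [hc]
    linarith
  obtain ⟨v, hv, hfv⟩ := exists_lt_count_of_mul_lt_card_filter_mem mul_lt_card_mem
  refine ⟨v, hv, fun w hw ↦ ?_⟩
  calc
    L.count w ≤ (L.filter (· ∉ Vc)).card := count_le_card_filter hw
    _ ≤ f := hf
    _ < L.count v := hfv
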